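/- Let n ≥ 2 be an even integer, set ε = (−1)^{n/2}, and let R = ℝ[[q]] be the ring of formal power series in one variable q over ℝ. Let A = R[x]/(x^{n+1} − 4qx) and B = R[u,v]/(u·v, v² + 4εq − ε·uⁿ), the quotients of the polynomial rings over R by the ideals generated by the listed elements. Then the assignment x ↦ u induces a well-defined injective R-algebra homomorphism A → B. -/

import Mathlib

/-!
The map is well defined because `u · (v² + 4εq - εuⁿ)` equals `-ε (u^{n+1} - 4qu)` modulo `uv`
(using `ε² = 1`).

For injectivity, `Spec B` is the union of the pieces `v = 0` and `u = 0`. If `p(u) = 0` in `B`,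
restricting to `v = 0` gives `xⁿ - 4q ∣ p` (`dvd_of_aeval_mem_absIdeal`), and restricting to
`u = 0` gives `p(0) = 0` (`coeff_zero_of_aeval_mem_absIdeal`). Writing `p = (xⁿ - 4q) t`, evaluation
at `0` yields `-4q · t(0) = 0`; as `ℝ[[q]]` is a domain, `x ∣ t`, so `x^{n+1} - 4qx ∣ p`.
-/

noncomputable section

/-- The Novikov ring `R = ℝ[[q]]`. -/
abbrev NovR : Type := PowerSeries ℝ

/-- The Novikov variable `q ∈ ℝ[[q]]`. -/
def qvar : NovR := PowerSeries.X

/-- The relations ideal of `QH*(X,L) = R[x]/(x^{n+1} − 4qx)` for the even-dimensional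
quadric. -/
def relIdeal (n : ℕ) : Ideal (Polynomial NovR) :=
  Ideal.span {Polynomial.X ^ (n + 1) - Polynomial.C (4 * qvar) * Polynomial.X}

/-- The relations ideal of `QH*(X) = R[u,v]/(uv, v² + 4εq − ε uⁿ)` with
`ε = (−1)^{n/2}`; here `u = X 0`, `v = X 1`. -/
def absIdeal (n : ℕ) : Ideal (MvPolynomial (Fin 2) NovR) :=
  Ideal.span
    {MvPolynomial.X 0 * MvPolynomial.X 1,
     MvPolynomial.X 1 ^ 2 + MvPolynomial.C (4 * (-1 : NovR) ^ (n / 2) * qvar)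
       - MvPolynomial.C ((-1 : NovR) ^ (n / 2)) * MvPolynomial.X 0 ^ n}

/-- Restriction to the component `v = 0`: the substitution `u ↦ x, v ↦ 0` sends the absolute
relations into `(xⁿ - 4q)`. -/
theorem dvd_of_aeval_mem_absIdeal {n : ℕ} {p : Polynomial NovR}
    (hp : Polynomial.aeval (MvPolynomial.X 0 : MvPolynomial (Fin 2) NovR) p ∈ absIdeal n) :
    Polynomial.X ^ n - Polynomial.C (4 * qvar) ∣ p := by
  rw [absIdeal, Ideal.mem_span_pair] at hp
  obtain ⟨a, b, hab⟩ := hp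
  have h := congrArg (MvPolynomial.aeval ![(Polynomial.X : Polynomial NovR), 0]) hab
  rw [← Polynomial.aeval_algHom_apply] at h
  simp only [map_add, map_sub, map_mul, map_pow, MvPolynomial.aeval_X, MvPolynomial.aeval_C,
    Matrix.cons_val_zero, Matrix.cons_val_one, Polynomial.aeval_X_left_apply,
    Polynomial.algebraMap_eq] at h
  rw [← h]
  refine ⟨-(MvPolynomial.aeval ![(Polynomial.X : Polynomial NovR), 0] b
    * Polynomial.C (-1) ^ (n / 2)), ?_⟩
  simp only [map_mul]
  ring

/-- Restriction to the component `u = 0`: the substitution `u ↦ 0, v ↦ y` shows that the constant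
`p(0)` is a multiple of the monic quadratic `y² + 4εq`, hence vanishes. -/
theorem coeff_zero_of_aeval_mem_absIdeal {n : ℕ} (hn : n ≠ 0) {p : Polynomial NovR}
    (hp : Polynomial.aeval (MvPolynomial.X 0 : MvPolynomial (Fin 2) NovR) p ∈ absIdeal n) :
    p.coeff 0 = 0 := by
  rw [absIdeal, Ideal.mem_span_pair] at hp
  obtain ⟨a, b, hab⟩ := hp
  have h := congrArg (MvPolynomial.aeval ![0, (Polynomial.X : Polynomial NovR)]) hab
  rw [← Polynomial.aeval_algHom_apply] at h
  have h0 : Polynomial.aeval (0 : Polynomial NovR) p = Polynomial.C (p.coeff 0) := by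
    rw [← map_zero (algebraMap NovR (Polynomial NovR)), Polynomial.aeval_algebraMap_apply,
      Polynomial.coeff_zero_eq_aeval_zero]
    rfl
  rw [MvPolynomial.aeval_X, Matrix.cons_val_zero, h0] at h
  have hdvd : Polynomial.X ^ 2 + Polynomial.C (4 * (-1 : NovR) ^ (n / 2) * qvar)
      ∣ Polynomial.C (p.coeff 0) := by
    refine ⟨MvPolynomial.aeval ![0, (Polynomial.X : Polynomial NovR)] b, ?_⟩
    rw [← h]
    simp only [map_add, map_sub, map_mul, map_pow, MvPolynomial.aeval_X, MvPolynomial.aeval_C,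
      Matrix.cons_val_zero, Matrix.cons_val_one, Polynomial.algebraMap_eq, zero_pow hn]
    ring
  by_contra hne
  refine (Polynomial.monic_X_pow_add_C _ two_ne_zero).not_dvd_of_natDegree_lt
    (Polynomial.C_ne_zero.mpr hne) ?_ hdvd
  rw [Polynomial.natDegree_C, Polynomial.natDegree_X_pow_add_C]
  norm_num

/-- for even `n ≥ 2`, with `ε = (−1)^{n/2}`, the assignment `x ↦ u`
induces a well-defined injective `R`-algebra homomorphism
`R[x]/(x^{n+1} − 4qx) → R[u,v]/(uv, v² + 4εq − ε uⁿ)`. -/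
theorem stmt_10 (n : ℕ) (hn : 2 ≤ n) (heven : Even n) :
    ∃ f : (Polynomial NovR ⧸ relIdeal n) →ₐ[NovR] (MvPolynomial (Fin 2) NovR ⧸ absIdeal n),
      f (Ideal.Quotient.mk (relIdeal n) Polynomial.X) =
        Ideal.Quotient.mk (absIdeal n) (MvPolynomial.X 0) ∧
      Function.Injective f := by
  classical
  set ε : NovR := (-1 : NovR) ^ (n / 2) with hε
  have hεε : ε * ε = 1 := by rw [hε, ← mul_pow]; simp
  have hn0 : n ≠ 0 := by omega
  have hwell : ∀ a ∈ relIdeal n,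
      ((Ideal.Quotient.mkₐ NovR (absIdeal n)).comp
        (Polynomial.aeval (MvPolynomial.X 0 : MvPolynomial (Fin 2) NovR))) a = 0 := by
    intro a ha
    obtain ⟨b, rfl⟩ := Ideal.mem_span_singleton.mp ha
    rw [map_mul]
    refine mul_eq_zero_of_left ?_ _
    rw [AlgHom.comp_apply, Ideal.Quotient.mkₐ_eq_mk, Ideal.Quotient.eq_zero_iff_mem, absIdeal,
      Ideal.mem_span_pair]
    -- `u^{n+1} - 4qu = εv · (uv) - εu · (v² + 4εq - εuⁿ)`, because `ε² = 1`.
    refine ⟨MvPolynomial.C ε * MvPolynomial.X 1, -(MvPolynomial.C ε * MvPolynomial.X 0), ?_⟩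
    have h2 : (MvPolynomial.C ε * MvPolynomial.C ε : MvPolynomial (Fin 2) NovR) = 1 := by
      rw [← MvPolynomial.C_mul, hεε, MvPolynomial.C_1]
    simp only [map_sub, map_mul, map_pow, Polynomial.aeval_X, Polynomial.aeval_C,
      MvPolynomial.algebraMap_eq, ← hε]
    linear_combination (MvPolynomial.X 0 ^ (n + 1)
      - MvPolynomial.C 4 * MvPolynomial.C qvar * MvPolynomial.X 0) * h2
  refine ⟨Ideal.Quotient.liftₐ (relIdeal n) _ hwell, ?_, ?_⟩
  · change ((Ideal.Quotient.mkₐ NovR (absIdeal n)).comp (Polynomial.aeval _)) Polynomial.X = _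
    simp
  · rw [injective_iff_map_eq_zero]
    intro a ha
    obtain ⟨p, rfl⟩ := Ideal.Quotient.mk_surjective a
    have hp : Polynomial.aeval (MvPolynomial.X 0 : MvPolynomial (Fin 2) NovR) p ∈ absIdeal n :=
      Ideal.Quotient.eq_zero_iff_mem.mp ha
    rw [Ideal.Quotient.eq_zero_iff_mem, relIdeal, Ideal.mem_span_singleton]
    have h1 := dvd_of_aeval_mem_absIdeal hp
    have h0 := coeff_zero_of_aeval_mem_absIdeal hn0 hp
    obtain ⟨t, rfl⟩ := h1
    have ht : t.coeff 0 = 0 := by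
      have h4 : (4 : NovR) ≠ 0 := by
        rw [← map_ofNat (PowerSeries.C (R := ℝ)) 4]
        exact (map_ne_zero_iff _ PowerSeries.C_injective).mpr four_ne_zero
      have hq : (4 * qvar : NovR) ≠ 0 := mul_ne_zero h4 PowerSeries.X_ne_zero
      rw [Polynomial.mul_coeff_zero] at h0
      rcases mul_eq_zero.mp h0 with h | h
      · simp only [Polynomial.coeff_sub, Polynomial.coeff_X_pow, Polynomial.coeff_C_zero,
          if_neg hn0.symm, zero_sub, neg_eq_zero] at h
        exact absurd h hq
      · exact h
    obtain ⟨s, rfl⟩ := Polynomial.X_dvd_iff.mpr ht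
    exact ⟨s, by ring⟩

end
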